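/- Let H²_β be the weighted Hardy space induced by a weight sequence w = (w_k)_{k≥1} with w_k → 1. Suppose there exist a sequence of positive numbers (α_j) tending to infinity and a sequence of positive integers (n_j) tending to infinity such that β_{n_j}/β_k ≥ β^{(α_j)}_k / β^{(α_j)}_{n_j} for every j and every 0 ≤ k ≤ n_j. Then for every t ∈ (0,1), with φ_t(z) = (t − z)/(1 − tz), the ratios ‖φ_t^{n_j}‖²_{H²_{β⁻¹}} / ‖z^{n_j}‖²_{H²_{β⁻¹}} tend to infinity as j → ∞; consequently the composition operator C_{φ_t} is unbounded on H²_{β⁻¹} and unbounded on H²_β. In particular, these conclusions hold whenever lim_{k→∞} (k+1)(w_k − 1) = +∞ or lim_{k→∞} (k+1)(w_k − 1) = −∞. -/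

import Mathlib

noncomputable section

open Complex Filter Topology

/-- The sequence-space (ℓ²) model of a weighted Hardy space `H²_β`.
An element `a : H2` represents the analytic function whose `k`-th Taylor
coefficient is `a k / β k` (so that `‖a‖` is exactly the `H²_β`-norm). -/
abbrev H2 : Type := lp (fun _ : ℕ => ℂ) 2

/-- The direct sum (ℓ²-sense) of `m` copies of `H2`. -/
abbrev Hm (m : ℕ) : Type := PiLp 2 (fun _ : Fin m => H2)

/-- The open unit disk 𝔻 ⊆ ℂ. -/
def unitDisk : Set ℂ := Metric.ball 0 1

/-- `β_0 = 1` and `β_k = ∏_{j=1}^k w_j`. -/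
def betaSeq (w : ℕ → ℝ) (k : ℕ) : ℝ := ∏ j ∈ Finset.Icc 1 k, w j

/-- The analytic function on 𝔻 represented by the vector `a` in the model of `H²_β`:
`f(z) = ∑_k (a k / β k) z^k`. -/
def repFun (β : ℕ → ℝ) (a : H2) (z : ℂ) : ℂ := ∑' k, (a k / (β k : ℂ)) * z ^ k

/-- `T` is (the ℓ²-model of) the multiplication operator `M_g` on `H²_β`.
Existence of such a `T` says precisely that `M_g` is bounded on `H²_β`. -/
def RepMul (β : ℕ → ℝ) (g : ℂ → ℂ) (T : H2 →L[ℂ] H2) : Prop :=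
  ∀ a : H2, ∀ z ∈ unitDisk, repFun β (T a) z = g z * repFun β a z

/-- `T` is (the ℓ²-model of) the composition operator `C_ψ` on `H²_β`.
Existence of such a `T` says precisely that `C_ψ` is bounded on `H²_β`. -/
def RepComp (β : ℕ → ℝ) (ψ : ℂ → ℂ) (T : H2 →L[ℂ] H2) : Prop :=
  ∀ a : H2, ∀ z ∈ unitDisk, repFun β (T a) z = repFun β a (ψ z)

/-- The Möbius factor `φ_{z₀}(z) = (z₀ - z)/(1 - conj z₀ · z)`. -/
def mobius (z₀ z : ℂ) : ℂ := (z₀ - z) / (1 - (starRingEnd ℂ) z₀ * z)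

/-- `φ` belongs to `Aut(𝔻)`, i.e. `φ(z) = e^{iθ}(z₀ - z)/(1 - conj z₀ · z)`. -/
def IsDiskAut (φ : ℂ → ℂ) : Prop :=
  ∃ (θ : ℝ) (z₀ : ℂ), z₀ ∈ unitDisk ∧
    ∀ z, φ z = Complex.exp (θ * Complex.I) * mobius z₀ z

/-- `B` is a finite Blaschke product of order `m`. -/
def IsBlaschke (m : ℕ) (B : ℂ → ℂ) : Prop :=
  ∃ (θ : ℝ) (zs : Fin m → ℂ), (∀ j, zs j ∈ unitDisk) ∧
    ∀ z, B z = Complex.exp (θ * Complex.I) * ∏ j, mobius (zs j) z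

/-- `w` is a positive weight sequence tending to `1` such that the weighted Hardy
space `H²_β` is of polynomial growth: `sup_k (k+1)|w_k - 1| < ∞`. -/
def PolyGrowth (w : ℕ → ℝ) : Prop :=
  (∀ k, 1 ≤ k → 0 < w k) ∧ Tendsto w atTop (nhds 1) ∧
    ∃ M : ℝ, ∀ k : ℕ, 1 ≤ k → ((k : ℝ) + 1) * |w k - 1| ≤ M

/-- `f` is analytic on an open neighbourhood of the closed unit disk. -/
def AnalyticOnClosedDisk (f : ℂ → ℂ) : Prop :=
  ∃ U : Set ℂ, IsOpen U ∧ Metric.closedBall (0:ℂ) 1 ⊆ U ∧ AnalyticOnNhd ℂ f U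

/-- The `k`-th Taylor coefficient of `f` at `0`. -/
def taylorCoef (f : ℂ → ℂ) (k : ℕ) : ℂ := iteratedDeriv k f 0 / (Nat.factorial k : ℂ)

/-- The squared norm of `f` in the classical Hardy space `H²`. -/
def hardyNormSq (f : ℂ → ℂ) : ℝ := ∑' k, ‖taylorCoef f k‖ ^ 2

/-- The squared norm of `f` in the weighted Hardy space with weights `γ`. -/
def wNormSq (γ : ℕ → ℝ) (f : ℂ → ℂ) : ℝ := ∑' k, ‖taylorCoef f k‖ ^ 2 * γ k ^ 2

/-- The weights `β^{(α)}_k = ∏_{j=1}^k √((j+1)/(j+2α+1))` of the weighted Bergman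
space `A²_α`. -/
def bergBeta (α : ℝ) (k : ℕ) : ℝ :=
  ∏ j ∈ Finset.Icc 1 k, Real.sqrt (((j : ℝ) + 1) / ((j : ℝ) + 2 * α + 1))

/-!
Write `φ = mobius z₀` and let `p_k = |c_k|²` for the Taylor coefficients `c` of `φ ^ n`. The
identity `|z₀ b - a|² - |b - conj z₀ a|² = (1 - |z₀|²)(|a|² - |b|²)`, applied to consecutive
coefficients, gives recurrences in `n` for the binomial moments of `p`: it is a probability
distribution of mean `n`, its second moment is `(1 + |z₀|²) / (1 - |z₀|²) * n²` and its third
moment is `O(n³)`. Hence `∑_{k < n} (n - k) p_k ≥ ε n` with `ε > 0` independent of `n`.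

The comparison with the Bergman weights yields `(β_n / β_k)² ≥ α (n - k) / n` for `k < n`, so that
the norm ratio `∑ (β_n / β_k)² p_k` is at least `ε α`, which tends to infinity along the given
sequences. This ratio is a lower bound for `‖C_φ‖²` on `H²_{β⁻¹}`. For `H²_β`, the adjoint of `C_φ`
bounds the sums over `n` of the squared `k`-th coefficients of `φ ^ n`; a reciprocity exchanging the
roles of `n` and `k` in these coefficients turns this into a bound for the same norm ratio.

If `(k + 1) (w_k - 1) → ∞`, then `β_k β^{(α)}_k → ∞` for every `α`, and an index at which this
sequence exceeds all its previous values satisfies the comparison.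
-/

section WeightSequences

/-- A real sequence `v` such that `∑ v_k z^k` converges on the unit disk. Moments and weighted
norms of functions analytic across the unit circle converge for such weights. -/
def IsSubexponential (v : ℕ → ℝ) : Prop :=
  ∀ r : ℝ, 0 < r → r < 1 → Summable fun k => v k * r ^ k

lemma IsSubexponential.comp_succ {v : ℕ → ℝ} (hv : IsSubexponential v) :
    IsSubexponential fun k => v (k + 1) := fun r hr hr1 => by
  have h := ((summable_nat_add_iff 1).2 (hv r hr hr1)).mul_right r⁻¹
  refine h.congr fun k => ?_
  field_simp
  ring

lemma isSubexponential_choose (d : ℕ) : IsSubexponential fun k => (k.choose d : ℝ) := by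
  intro r hr hr1
  have hs := summable_pow_mul_geometric_of_norm_lt_one (R := ℝ) d (r := r)
    (by rwa [Real.norm_of_nonneg hr.le])
  refine hs.of_nonneg_of_le (fun k => by positivity) fun k => ?_
  have hchoose : (k.choose d : ℝ) ≤ (k : ℝ) ^ d := mod_cast Nat.choose_le_pow k d
  exact mul_le_mul_of_nonneg_right hchoose (by positivity)

/-- The weights of the weighted Hardy spaces under consideration: positive sequences whose
consecutive ratios `w_{k+1} = β_{k+1} / β_k` tend to `1`. Unlike `betaSeq`, the value `β 0` is
left free. -/
structure IsRegularWeight (β : ℕ → ℝ) : Prop where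
  pos : ∀ k, 0 < β k
  tendsto_ratio : Tendsto (fun k => β (k + 1) / β k) atTop (𝓝 1)

namespace IsRegularWeight

variable {β : ℕ → ℝ}

lemma inv (hβ : IsRegularWeight β) : IsRegularWeight fun k => (β k)⁻¹ where
  pos k := inv_pos.2 (hβ.pos k)
  tendsto_ratio := by
    simpa only [inv_div_inv, inv_div, inv_one] using hβ.tendsto_ratio.inv₀ one_ne_zero

lemma pow (hβ : IsRegularWeight β) (d : ℕ) : IsRegularWeight fun k => β k ^ d where
  pos k := pow_pos (hβ.pos k) d
  tendsto_ratio := by simpa only [div_pow, one_pow] using hβ.tendsto_ratio.pow d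

lemma isSubexponential (hβ : IsRegularWeight β) : IsSubexponential β := by
  intro r hr hr1
  have hpos : ∀ k, 0 < β k * r ^ k := fun k => mul_pos (hβ.pos k) (pow_pos hr k)
  refine summable_of_ratio_test_tendsto_lt_one hr1
    (Eventually.of_forall fun k => (hpos k).ne') ?_
  convert! hβ.tendsto_ratio.mul_const r using 2 with k
  · rw [Real.norm_of_nonneg (hpos _).le, Real.norm_of_nonneg (hpos _).le]
    field_simp
    ring
  · rw [one_mul]

lemma exists_succ_le_mul (hβ : IsRegularWeight β) : ∃ V, 0 ≤ V ∧ ∀ k, β (k + 1) ≤ V * β k := by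
  obtain ⟨V, hV⟩ := hβ.tendsto_ratio.bddAbove_range
  have hratio : ∀ k, β (k + 1) / β k ≤ V := fun k => hV ⟨k, rfl⟩
  exact ⟨V, (div_pos (hβ.pos 1) (hβ.pos 0)).le.trans (hratio 0),
    fun k => (div_le_iff₀ (hβ.pos k)).1 (hratio k)⟩

lemma exists_le_mul_succ (hβ : IsRegularWeight β) : ∃ U, 0 ≤ U ∧ ∀ k, β k ≤ U * β (k + 1) := by
  obtain ⟨U, hU, h⟩ := hβ.inv.exists_succ_le_mul
  refine ⟨U, hU, fun k => ?_⟩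
  have hk := h k
  rwa [← div_eq_mul_inv, inv_eq_one_div, div_le_div_iff₀ (hβ.pos _) (hβ.pos _), one_mul] at hk

end IsRegularWeight

lemma betaSeq_succ (w : ℕ → ℝ) (k : ℕ) : betaSeq w (k + 1) = betaSeq w k * w (k + 1) :=
  Finset.prod_Icc_succ_top (by simp) w

lemma betaSeq_inv (w : ℕ → ℝ) : betaSeq (fun k => (w k)⁻¹) = fun k => (betaSeq w k)⁻¹ :=
  funext fun _ => Finset.prod_inv_distrib _

lemma betaSeq_pos {w : ℕ → ℝ} (hpos : ∀ k, 1 ≤ k → 0 < w k) (k : ℕ) : 0 < betaSeq w k :=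
  Finset.prod_pos fun i hi => hpos i (Finset.mem_Icc.1 hi).1

lemma isRegularWeight_betaSeq {w : ℕ → ℝ} (hpos : ∀ k, 1 ≤ k → 0 < w k)
    (hlim : Tendsto w atTop (𝓝 1)) : IsRegularWeight (betaSeq w) where
  pos := betaSeq_pos hpos
  tendsto_ratio := by
    refine ((tendsto_add_atTop_iff_nat 1).2 hlim).congr fun k => ?_
    rw [betaSeq_succ, mul_div_cancel_left₀ _ (betaSeq_pos hpos k).ne']

end WeightSequences

section LinearFactor

open PowerSeries

variable {R : Type*} [CommRing R]

lemma coeff_zero_C_sub_C_mul_X_mul (a b : R) (f : PowerSeries R) :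
    coeff 0 ((C a - C b * X) * f) = a * coeff 0 f := by
  simp

lemma coeff_succ_C_sub_C_mul_X_mul (a b : R) (f : PowerSeries R) (k : ℕ) :
    coeff (k + 1) ((C a - C b * X) * f) = a * coeff (k + 1) f - b * coeff k f := by
  rw [sub_mul, map_sub, coeff_C_mul, mul_assoc, coeff_C_mul, coeff_succ_X_mul]

end LinearFactor

section PowerSeriesSums

open PowerSeries

variable {R : Type*} [NormedCommRing R] {f g : PowerSeries R}

lemma summable_norm_coeff_mul (hf : Summable fun k => ‖coeff k f‖)
    (hg : Summable fun k => ‖coeff k g‖) : Summable fun k => ‖coeff k (f * g)‖ := by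
  simpa only [coeff_mul] using summable_norm_sum_mul_antidiagonal_of_summable_norm hf hg

lemma tsum_coeff_mul [CompleteSpace R] (hf : Summable fun k => ‖coeff k f‖)
    (hg : Summable fun k => ‖coeff k g‖) :
    ∑' k, coeff k (f * g) = (∑' k, coeff k f) * ∑' k, coeff k g := by
  simpa only [coeff_mul] using
    (tsum_mul_tsum_eq_tsum_sum_antidiagonal_of_summable_norm hf hg).symm

lemma summable_norm_coeff_pow (hf : Summable fun k => ‖coeff k f‖) (n : ℕ) :
    Summable fun k => ‖coeff k (f ^ n)‖ := by
  induction n with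
  | zero =>
    refine summable_of_ne_finset_zero (s := {0}) fun k hk => ?_
    simp [coeff_one, Finset.notMem_singleton.1 hk]
  | succ n ih => simpa only [pow_succ] using summable_norm_coeff_mul ih hf

lemma tsum_coeff_pow [CompleteSpace R] (hf : Summable fun k => ‖coeff k f‖) (n : ℕ) :
    ∑' k, coeff k (f ^ n) = (∑' k, coeff k f) ^ n := by
  induction n with
  | zero => simp [coeff_one]
  | succ n ih => rw [pow_succ, tsum_coeff_mul (summable_norm_coeff_pow hf n) hf, ih, pow_succ]

end PowerSeriesSums

section MobiusSeries

open PowerSeries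
open scoped ComplexConjugate

/-- The Taylor series at `0` of `(z₀ - z) ^ n / (1 - conj z₀ * z) ^ (n + s)`. For `s = 0` this is
the `n`-th power of `mobius z₀`; the extra factors of the denominator arise from differentiating
these powers. -/
def mobiusSeries (z₀ : ℂ) (s n : ℕ) : PowerSeries ℂ :=
  (C z₀ - C 1 * X) ^ n * ((C 1 - C (conj z₀) * X)⁻¹) ^ (n + s)

lemma coeff_inv_one_sub_C_mul_X {K : Type*} [Field K] (a : K) (k : ℕ) :
    coeff k (C 1 - C a * X)⁻¹ = a ^ k := by
  have h : (C 1 - C a * X)⁻¹ = PowerSeries.mk fun k => a ^ k := by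
    symm
    rw [PowerSeries.eq_inv_iff_mul_eq_one (by simp), mul_comm]
    ext (_ | k)
    · simp
    · rw [coeff_succ_C_sub_C_mul_X_mul, coeff_one, if_neg k.succ_ne_zero]
      simp [pow_succ']
  rw [h, coeff_mk]

variable (z₀ : ℂ) (s n : ℕ)

lemma denominator_mul_mobiusSeries :
    (C 1 - C (conj z₀) * X) * mobiusSeries z₀ (s + 1) n = mobiusSeries z₀ s n := by
  have h : (C 1 - C (conj z₀) * X) * (C 1 - C (conj z₀) * X)⁻¹ = 1 :=
    PowerSeries.mul_inv_cancel _ (by simp)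
  rw [mobiusSeries, mobiusSeries, ← add_assoc, pow_succ _ (n + s)]
  linear_combination (C z₀ - C 1 * X) ^ n * (C 1 - C (conj z₀) * X)⁻¹ ^ (n + s) * h

lemma numerator_mul_mobiusSeries :
    (C z₀ - C 1 * X) * mobiusSeries z₀ (s + 1) n = mobiusSeries z₀ s (n + 1) := by
  rw [mobiusSeries, mobiusSeries, pow_succ', add_right_comm n 1 s, add_assoc, mul_assoc]

lemma mobiusSeries_zero_zero : mobiusSeries z₀ 0 0 = 1 := by
  simp [mobiusSeries]

lemma coeff_mobiusSeries_one_zero (k : ℕ) : coeff k (mobiusSeries z₀ 1 0) = conj z₀ ^ k := by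
  rw [mobiusSeries, pow_zero, one_mul, zero_add, pow_one, coeff_inv_one_sub_C_mul_X]

lemma coeff_mobiusSeries_two_zero (k : ℕ) :
    coeff k (mobiusSeries z₀ 2 0) = (k + 1) * conj z₀ ^ k := by
  induction k with
  | zero =>
    have h := coeff_zero_C_sub_C_mul_X_mul 1 (conj z₀) (mobiusSeries z₀ 2 0)
    rw [denominator_mul_mobiusSeries, coeff_mobiusSeries_one_zero] at h
    simpa using h.symm
  | succ k ih =>
    have h := coeff_succ_C_sub_C_mul_X_mul 1 (conj z₀) (mobiusSeries z₀ 2 0) k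
    rw [denominator_mul_mobiusSeries, coeff_mobiusSeries_one_zero, ih] at h
    push_cast
    linear_combination -h

variable {z₀}

lemma rescale_mobiusSeries (ζ : ℂ) :
    rescale ζ (mobiusSeries z₀ s n) =
      rescale ζ (C z₀ - C 1 * X) ^ n * rescale ζ (C 1 - C (conj z₀) * X)⁻¹ ^ (n + s) := by
  rw [mobiusSeries, map_mul, map_pow, map_pow]

lemma coeff_rescale_inv_denominator (ζ : ℂ) (k : ℕ) :
    coeff k (rescale ζ (C 1 - C (conj z₀) * X)⁻¹) = (conj z₀ * ζ) ^ k := by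
  rw [coeff_rescale, coeff_inv_one_sub_C_mul_X, mul_comm, mul_pow]

lemma coeff_rescale_numerator_of_notMem {ζ : ℂ} {k : ℕ} (hk : k ∉ Finset.range 2) :
    coeff k (rescale ζ (C z₀ - C 1 * X)) = 0 := by
  rw [Finset.mem_range, not_lt] at hk
  simp [coeff_rescale, coeff_C, coeff_X, show k ≠ 0 by omega, show k ≠ 1 by omega]

lemma norm_conj_mul_lt_one {ζ : ℂ} (hζ : ‖z₀‖ * ‖ζ‖ < 1) : ‖conj z₀ * ζ‖ < 1 := by
  rwa [norm_mul, RCLike.norm_conj]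

lemma summable_norm_coeff_rescale_numerator (ζ : ℂ) :
    Summable fun k => ‖coeff k (rescale ζ (C z₀ - C 1 * X))‖ :=
  summable_of_ne_finset_zero fun _ hk => by
    rw [coeff_rescale_numerator_of_notMem hk, norm_zero]

lemma summable_norm_coeff_rescale_inv_denominator {ζ : ℂ} (hζ : ‖z₀‖ * ‖ζ‖ < 1) :
    Summable fun k => ‖coeff k (rescale ζ (C 1 - C (conj z₀) * X)⁻¹)‖ := by
  simpa only [coeff_rescale_inv_denominator, norm_pow] using
    summable_geometric_of_lt_one (norm_nonneg _) (norm_conj_mul_lt_one hζ)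

lemma summable_norm_coeff_rescale_mobiusSeries {ζ : ℂ} (hζ : ‖z₀‖ * ‖ζ‖ < 1) :
    Summable fun k => ‖coeff k (rescale ζ (mobiusSeries z₀ s n))‖ := by
  rw [rescale_mobiusSeries]
  exact summable_norm_coeff_mul
    (summable_norm_coeff_pow (summable_norm_coeff_rescale_numerator ζ) n)
    (summable_norm_coeff_pow (summable_norm_coeff_rescale_inv_denominator hζ) (n + s))

lemma hasSum_coeff_mobiusSeries {ζ : ℂ} (hζ : ‖z₀‖ * ‖ζ‖ < 1) :
    HasSum (fun k => coeff k (mobiusSeries z₀ s n) * ζ ^ k)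
      ((z₀ - ζ) ^ n * ((1 - conj z₀ * ζ)⁻¹) ^ (n + s)) := by
  have hnum := summable_norm_coeff_rescale_numerator (z₀ := z₀) ζ
  have hden := summable_norm_coeff_rescale_inv_denominator hζ
  have hnum_sum : ∑' k, coeff k (rescale ζ (C z₀ - C 1 * X)) = z₀ - ζ := by
    rw [tsum_eq_sum fun _ hk => coeff_rescale_numerator_of_notMem hk]
    simp [Finset.sum_range_succ, coeff_rescale, sub_eq_add_neg]
  have hden_sum : ∑' k, coeff k (rescale ζ (C 1 - C (conj z₀) * X)⁻¹) = (1 - conj z₀ * ζ)⁻¹ := by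
    simp only [coeff_rescale_inv_denominator, tsum_geometric_of_norm_lt_one
      (norm_conj_mul_lt_one hζ)]
  have hsum := (summable_norm_coeff_rescale_mobiusSeries s n hζ).of_norm.hasSum
  rw [rescale_mobiusSeries, tsum_coeff_mul (summable_norm_coeff_pow hnum n)
    (summable_norm_coeff_pow hden _), tsum_coeff_pow hnum, tsum_coeff_pow hden, hnum_sum,
    hden_sum, ← rescale_mobiusSeries] at hsum
  simpa only [coeff_rescale, mul_comm (ζ ^ _)] using hsum

lemma hasSum_mobius_pow (hz₀ : ‖z₀‖ < 1) {ζ : ℂ} (hζ : ζ ∈ unitDisk) :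
    HasSum (fun k => coeff k (mobiusSeries z₀ 0 n) * ζ ^ k) (mobius z₀ ζ ^ n) := by
  have hζ' : ‖ζ‖ < 1 := mem_ball_zero_iff.1 hζ
  have hz₀ζ : ‖z₀‖ * ‖ζ‖ < 1 := mul_lt_one_of_nonneg_of_lt_one_left (norm_nonneg _) hz₀ hζ'.le
  convert! hasSum_coeff_mobiusSeries 0 n hz₀ζ using 1
  rw [mobius, div_eq_mul_inv, mul_pow, add_zero]

lemma exists_norm_coeff_mobiusSeries_le {ρ : ℝ} (hρ : ‖z₀‖ < ρ) :
    ∃ B, ∀ k, ‖coeff k (mobiusSeries z₀ s n)‖ ≤ B * ρ ^ k := by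
  have hρ_pos : 0 < ρ := (norm_nonneg z₀).trans_lt hρ
  have hζ : ‖z₀‖ * ‖((ρ⁻¹ : ℝ) : ℂ)‖ < 1 := by
    rwa [Complex.norm_of_nonneg (inv_nonneg.2 hρ_pos.le), ← div_eq_mul_inv, div_lt_one hρ_pos]
  have hs := summable_norm_coeff_rescale_mobiusSeries s n hζ
  refine ⟨∑' k, ‖coeff k (rescale ((ρ⁻¹ : ℝ) : ℂ) (mobiusSeries z₀ s n))‖,
    fun k => ?_⟩
  have hk := hs.le_tsum k fun _ _ => norm_nonneg _
  rwa [coeff_rescale, norm_mul, norm_pow, Complex.norm_of_nonneg (inv_nonneg.2 hρ_pos.le),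
    inv_pow, inv_mul_le_iff₀ (pow_pos hρ_pos k), mul_comm] at hk

lemma summable_mul_sq_coeff_mobiusSeries (hz₀ : ‖z₀‖ < 1) {v : ℕ → ℝ} (hv : IsSubexponential v) :
    Summable fun k => v k * ‖coeff k (mobiusSeries z₀ s n)‖ ^ 2 := by
  obtain ⟨ρ, hρ, hρ1⟩ := exists_between hz₀
  have hρ_pos : 0 < ρ := (norm_nonneg z₀).trans_lt hρ
  obtain ⟨B, hcoeff⟩ := exists_norm_coeff_mobiusSeries_le s n hρ
  have hs := (hv (ρ ^ 2) (pow_pos hρ_pos 2) (pow_lt_one₀ hρ_pos.le hρ1 two_ne_zero)).norm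
  refine (hs.mul_left (B ^ 2)).of_norm_bounded fun k => ?_
  have hsq : ‖coeff k (mobiusSeries z₀ s n)‖ ^ 2 ≤ (B * ρ ^ k) ^ 2 := by
    gcongr
    exact hcoeff k
  calc ‖v k * ‖coeff k (mobiusSeries z₀ s n)‖ ^ 2‖
      = ‖v k‖ * ‖coeff k (mobiusSeries z₀ s n)‖ ^ 2 := by
        rw [norm_mul, Real.norm_of_nonneg (sq_nonneg _)]
    _ ≤ ‖v k‖ * (B * ρ ^ k) ^ 2 := by gcongr
    _ = B ^ 2 * ‖v k * (ρ ^ 2) ^ k‖ := by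
        rw [norm_mul, Real.norm_of_nonneg (by positivity : 0 ≤ (ρ ^ 2) ^ k)]
        ring

end MobiusSeries

section Moments

open PowerSeries
open scoped ComplexConjugate

/-- The squared norm `∑ v_k |f_k|²` of a power series `f` with respect to the (not necessarily
positive) weights `v`. -/
def weightedSq (v : ℕ → ℝ) (f : PowerSeries ℂ) : ℝ := ∑' k, v k * ‖coeff k f‖ ^ 2

lemma norm_mul_sub_sq_sub_norm_sub_conj_mul_sq (z a b : ℂ) :
    ‖z * b - a‖ ^ 2 - ‖b - conj z * a‖ ^ 2 = (1 - ‖z‖ ^ 2) * (‖a‖ ^ 2 - ‖b‖ ^ 2) := by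
  simp only [Complex.sq_norm, Complex.normSq_apply, Complex.sub_re, Complex.sub_im,
    Complex.mul_re, Complex.mul_im, Complex.conj_re, Complex.conj_im]
  ring

variable {z₀ : ℂ}

lemma weightedSq_mobiusSeries_succ (hz₀ : ‖z₀‖ < 1) {v : ℕ → ℝ} (hv : IsSubexponential v)
    (s n : ℕ) :
    weightedSq v (mobiusSeries z₀ s (n + 1)) = weightedSq v (mobiusSeries z₀ s n) +
      (1 - ‖z₀‖ ^ 2) * (weightedSq (fun k => v (k + 1)) (mobiusSeries z₀ (s + 1) n) -
        weightedSq v (mobiusSeries z₀ (s + 1) n)) := by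
  set g := mobiusSeries z₀ (s + 1) n with hg
  have hsn := summable_mul_sq_coeff_mobiusSeries s n hz₀ hv
  have hsn' := summable_mul_sq_coeff_mobiusSeries s (n + 1) hz₀ hv
  have hsg := summable_mul_sq_coeff_mobiusSeries (s + 1) n hz₀ hv
  have hsg' := summable_mul_sq_coeff_mobiusSeries (s + 1) n hz₀ hv.comp_succ
  have hzero : v 0 * ‖coeff 0 (mobiusSeries z₀ s (n + 1))‖ ^ 2 -
      v 0 * ‖coeff 0 (mobiusSeries z₀ s n)‖ ^ 2 =
        -((1 - ‖z₀‖ ^ 2) * (v 0 * ‖coeff 0 g‖ ^ 2)) := by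
    rw [← numerator_mul_mobiusSeries z₀ s n, ← denominator_mul_mobiusSeries z₀ s n, ← hg,
      coeff_zero_C_sub_C_mul_X_mul, coeff_zero_C_sub_C_mul_X_mul, norm_mul, one_mul]
    ring
  have hsucc (k : ℕ) : v (k + 1) * ‖coeff (k + 1) (mobiusSeries z₀ s (n + 1))‖ ^ 2 -
      v (k + 1) * ‖coeff (k + 1) (mobiusSeries z₀ s n)‖ ^ 2 =
        (1 - ‖z₀‖ ^ 2) * (v (k + 1) * ‖coeff k g‖ ^ 2 - v (k + 1) * ‖coeff (k + 1) g‖ ^ 2) := by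
    rw [← numerator_mul_mobiusSeries z₀ s n, ← denominator_mul_mobiusSeries z₀ s n, ← hg,
      coeff_succ_C_sub_C_mul_X_mul, coeff_succ_C_sub_C_mul_X_mul, one_mul, one_mul, ← mul_sub,
      norm_mul_sub_sq_sub_norm_sub_conj_mul_sq]
    ring
  have hsg_succ := (summable_nat_add_iff 1).2 hsg
  rw [← sub_eq_iff_eq_add', weightedSq, weightedSq, ← hsn'.tsum_sub hsn,
    (hsn'.sub hsn).tsum_eq_zero_add, hzero, tsum_congr hsucc, tsum_mul_left,
    hsg'.tsum_sub hsg_succ, weightedSq, weightedSq, hsg.tsum_eq_zero_add]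
  ring

/-- The `d`-th binomial moment `∑ (k choose d) |c_k|²` of the coefficients `c` of
`mobiusSeries z₀ s n`. -/
def binomialMoment (z₀ : ℂ) (d s n : ℕ) : ℝ :=
  weightedSq (fun k => (k.choose d : ℝ)) (mobiusSeries z₀ s n)

lemma hasSum_binomialMoment (hz₀ : ‖z₀‖ < 1) (d s n : ℕ) :
    HasSum (fun k => (k.choose d : ℝ) * ‖coeff k (mobiusSeries z₀ s n)‖ ^ 2)
      (binomialMoment z₀ d s n) :=
  (summable_mul_sq_coeff_mobiusSeries s n hz₀ (isSubexponential_choose d)).hasSum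

lemma binomialMoment_nonneg (z₀ : ℂ) (d s n : ℕ) : 0 ≤ binomialMoment z₀ d s n :=
  tsum_nonneg fun _ => by positivity

lemma binomialMoment_zero_left (hz₀ : ‖z₀‖ < 1) (s n : ℕ) :
    binomialMoment z₀ 0 s n = binomialMoment z₀ 0 s 0 := by
  induction n with
  | zero => rfl
  | succ n ih =>
    rw [← ih, binomialMoment, weightedSq_mobiusSeries_succ hz₀ (isSubexponential_choose 0)]
    simp only [Nat.choose_zero_right, sub_self, mul_zero, add_zero, binomialMoment]

lemma binomialMoment_succ_succ (hz₀ : ‖z₀‖ < 1) (d s n : ℕ) :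
    binomialMoment z₀ (d + 1) s (n + 1) = binomialMoment z₀ (d + 1) s n +
      (1 - ‖z₀‖ ^ 2) * binomialMoment z₀ d (s + 1) n := by
  have hpascal : weightedSq (fun k => ((k + 1).choose (d + 1) : ℝ)) (mobiusSeries z₀ (s + 1) n) =
      binomialMoment z₀ d (s + 1) n + binomialMoment z₀ (d + 1) (s + 1) n := by
    have h := (hasSum_binomialMoment hz₀ d (s + 1) n).add
      (hasSum_binomialMoment hz₀ (d + 1) (s + 1) n)
    simpa only [weightedSq, Nat.choose_succ_succ', Nat.cast_add, add_mul] using h.tsum_eq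
  rw [binomialMoment, weightedSq_mobiusSeries_succ hz₀ (isSubexponential_choose (d + 1)), hpascal,
    ← binomialMoment, ← binomialMoment]
  ring

lemma binomialMoment_zero_zero_zero (z₀ : ℂ) : binomialMoment z₀ 0 0 0 = 1 := by
  rw [binomialMoment, weightedSq, tsum_eq_single 0 fun k hk => by
    simp [mobiusSeries_zero_zero, coeff_one, hk]]
  simp [mobiusSeries_zero_zero]

lemma binomialMoment_succ_zero_zero (z₀ : ℂ) (d : ℕ) : binomialMoment z₀ (d + 1) 0 0 = 0 := by
  refine (tsum_congr fun k => ?_).trans tsum_zero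
  rcases eq_or_ne k 0 with rfl | hk
  · simp
  · simp [mobiusSeries_zero_zero, coeff_one, hk]

lemma sq_norm_lt_one (hz₀ : ‖z₀‖ < 1) : ‖z₀‖ ^ 2 < 1 :=
  pow_lt_one₀ (norm_nonneg _) hz₀ two_ne_zero

lemma norm_coeff_mobiusSeries_one_zero_sq (k : ℕ) :
    ‖coeff k (mobiusSeries z₀ 1 0)‖ ^ 2 = (‖z₀‖ ^ 2) ^ k := by
  rw [coeff_mobiusSeries_one_zero, norm_pow, RCLike.norm_conj, pow_right_comm]

lemma binomialMoment_zero_one_zero (hz₀ : ‖z₀‖ < 1) :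
    (1 - ‖z₀‖ ^ 2) * binomialMoment z₀ 0 1 0 = 1 := by
  have hq := sq_norm_lt_one hz₀
  simp only [binomialMoment, weightedSq, norm_coeff_mobiusSeries_one_zero_sq,
    Nat.choose_zero_right, Nat.cast_one, one_mul, tsum_geometric_of_lt_one (sq_nonneg _) hq]
  exact mul_inv_cancel₀ (sub_pos.2 hq).ne'

lemma binomialMoment_one_one_zero (hz₀ : ‖z₀‖ < 1) :
    (1 - ‖z₀‖ ^ 2) ^ 2 * binomialMoment z₀ 1 1 0 = ‖z₀‖ ^ 2 := by
  have hq := sq_norm_lt_one hz₀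
  have hgeom : ∑' k : ℕ, (k : ℝ) * (‖z₀‖ ^ 2) ^ k = ‖z₀‖ ^ 2 / (1 - ‖z₀‖ ^ 2) ^ 2 :=
    tsum_coe_mul_geometric_of_norm_lt_one (by rwa [Real.norm_of_nonneg (sq_nonneg _)])
  simp only [binomialMoment, weightedSq, norm_coeff_mobiusSeries_one_zero_sq, Nat.choose_one_right,
    hgeom]
  exact mul_div_cancel₀ _ (pow_pos (sub_pos.2 hq) 2).ne'

lemma binomialMoment_zero_two_zero (hz₀ : ‖z₀‖ < 1) :
    (1 - ‖z₀‖ ^ 2) ^ 3 * binomialMoment z₀ 0 2 0 = 1 + ‖z₀‖ ^ 2 := by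
  set q := ‖z₀‖ ^ 2 with hq_def
  have hq : q < 1 := sq_norm_lt_one hz₀
  have hq' : ‖q‖ < 1 := by rwa [Real.norm_of_nonneg (sq_nonneg _)]
  have hcoeff (k : ℕ) : ((k.choose 0 : ℕ) : ℝ) * ‖coeff k (mobiusSeries z₀ 2 0)‖ ^ 2 =
      2 * (((k + 2).choose 2 : ℕ) * q ^ k) - ((k + 1).choose 1 : ℕ) * q ^ k := by
    have hnorm : ‖(k : ℂ) + 1‖ = k + 1 := by exact_mod_cast Complex.norm_natCast (k + 1)
    rw [coeff_mobiusSeries_two_zero, norm_mul, hnorm, norm_pow, RCLike.norm_conj, mul_pow,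
      pow_right_comm, ← hq_def, Nat.cast_choose_two, Nat.choose_one_right, Nat.choose_zero_right]
    push_cast
    ring
  have h1 := hasSum_choose_mul_geometric_of_norm_lt_one (𝕜 := ℝ) 1 hq'
  have h2 := hasSum_choose_mul_geometric_of_norm_lt_one (𝕜 := ℝ) 2 hq'
  have hsum := ((h2.mul_left 2).sub h1).tsum_eq
  rw [binomialMoment, weightedSq, tsum_congr hcoeff, hsum]
  have := (sub_pos.2 hq).ne'
  field_simp
  ring

lemma binomialMoment_one_zero (hz₀ : ‖z₀‖ < 1) (n : ℕ) : binomialMoment z₀ 1 0 n = n := by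
  induction n with
  | zero => simpa using binomialMoment_succ_zero_zero z₀ 0
  | succ n ih =>
    rw [binomialMoment_succ_succ hz₀, ih, binomialMoment_zero_left hz₀,
      binomialMoment_zero_one_zero hz₀, Nat.cast_succ]

lemma binomialMoment_one_one (hz₀ : ‖z₀‖ < 1) (n : ℕ) :
    (1 - ‖z₀‖ ^ 2) ^ 2 * binomialMoment z₀ 1 1 n = ‖z₀‖ ^ 2 + n * (1 + ‖z₀‖ ^ 2) := by
  induction n with
  | zero => simpa using binomialMoment_one_one_zero hz₀
  | succ n ih =>
    rw [binomialMoment_succ_succ hz₀, binomialMoment_zero_left hz₀, Nat.cast_succ]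
    linear_combination ih + binomialMoment_zero_two_zero hz₀

lemma binomialMoment_two_zero (hz₀ : ‖z₀‖ < 1) (n : ℕ) :
    (1 - ‖z₀‖ ^ 2) * (2 * binomialMoment z₀ 2 0 n) =
      (1 + ‖z₀‖ ^ 2) * n ^ 2 - (1 - ‖z₀‖ ^ 2) * n := by
  induction n with
  | zero => simp [binomialMoment_succ_zero_zero]
  | succ n ih =>
    rw [binomialMoment_succ_succ hz₀, Nat.cast_succ]
    linear_combination ih + 2 * binomialMoment_one_one hz₀ n

lemma binomialMoment_succ_le (hz₀ : ‖z₀‖ < 1) {d s : ℕ} {B : ℝ}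
    (hB : ∀ n : ℕ, binomialMoment z₀ d (s + 1) n ≤ B * (n + 1) ^ d) (n : ℕ) :
    binomialMoment z₀ (d + 1) s n ≤ binomialMoment z₀ (d + 1) s 0 + B * n * (n + 1) ^ d := by
  have hB0 : 0 ≤ B := by simpa using (binomialMoment_nonneg z₀ d (s + 1) 0).trans (hB 0)
  induction n with
  | zero => simp
  | succ n ih =>
    have hstep : (1 - ‖z₀‖ ^ 2) * binomialMoment z₀ d (s + 1) n ≤ B * (n + 1) ^ d :=
      (mul_le_of_le_one_left (binomialMoment_nonneg z₀ d (s + 1) n)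
        (sub_le_self 1 (sq_nonneg _))).trans (hB n)
    calc binomialMoment z₀ (d + 1) s (n + 1)
        ≤ binomialMoment z₀ (d + 1) s 0 + B * n * (n + 1) ^ d + B * (n + 1) ^ d := by
          rw [binomialMoment_succ_succ hz₀]
          exact add_le_add ih hstep
      _ = binomialMoment z₀ (d + 1) s 0 + B * (n + 1) * (n + 1) ^ d := by ring
      _ ≤ binomialMoment z₀ (d + 1) s 0 + B * ↑(n + 1) * (↑(n + 1) + 1) ^ d := by
          push_cast
          gcongr
          linarith

lemma exists_binomialMoment_le (hz₀ : ‖z₀‖ < 1) (d s : ℕ) :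
    ∃ B : ℝ, ∀ n : ℕ, binomialMoment z₀ d s n ≤ B * (n + 1) ^ d := by
  induction d generalizing s with
  | zero => exact ⟨_, fun n => by rw [binomialMoment_zero_left hz₀, pow_zero, mul_one]⟩
  | succ d ih =>
    obtain ⟨B, hB⟩ := ih (s + 1)
    have hB0 : 0 ≤ B := by simpa using (binomialMoment_nonneg z₀ d (s + 1) 0).trans (hB 0)
    refine ⟨binomialMoment z₀ (d + 1) s 0 + B, fun n => ?_⟩
    have hA := binomialMoment_nonneg z₀ (d + 1) s 0
    have hn : (1 : ℝ) ≤ (n + 1) ^ (d + 1) := one_le_pow₀ (by simp)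
    calc binomialMoment z₀ (d + 1) s n
        ≤ binomialMoment z₀ (d + 1) s 0 + B * n * (n + 1) ^ d := binomialMoment_succ_le hz₀ hB n
      _ ≤ binomialMoment z₀ (d + 1) s 0 * (n + 1) ^ (d + 1) + B * (n + 1) * (n + 1) ^ d := by
          gcongr
          · exact le_mul_of_one_le_right hA hn
          · linarith
      _ = (binomialMoment z₀ (d + 1) s 0 + B) * (n + 1) ^ (d + 1) := by ring

lemma exists_binomialMoment_zero_le (hz₀ : ‖z₀‖ < 1) (d : ℕ) :
    ∃ B : ℝ, 0 ≤ B ∧ ∀ n : ℕ, binomialMoment z₀ d 0 n ≤ B * n ^ d := by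
  obtain _ | d := d
  · refine ⟨1, zero_le_one, fun n => ?_⟩
    rw [binomialMoment_zero_left hz₀, binomialMoment_zero_zero_zero, pow_zero, mul_one]
  obtain ⟨B, hB⟩ := exists_binomialMoment_le hz₀ d 1
  have hB0 : 0 ≤ B := by simpa using (binomialMoment_nonneg z₀ d 1 0).trans (hB 0)
  refine ⟨B * 2 ^ d, by positivity, fun n => ?_⟩
  obtain rfl | hn := Nat.eq_zero_or_pos n
  · simp [binomialMoment_succ_zero_zero]
  have hn' : (n : ℝ) + 1 ≤ 2 * n := by
    have : (1 : ℝ) ≤ n := mod_cast hn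
    linarith
  calc binomialMoment z₀ (d + 1) 0 n
      ≤ B * n * (n + 1) ^ d := by
        simpa [binomialMoment_succ_zero_zero] using binomialMoment_succ_le hz₀ hB n
    _ ≤ B * n * (2 * n) ^ d := by gcongr
    _ = B * 2 ^ d * n ^ (d + 1) := by ring

lemma hasSum_norm_coeff_mobiusSeries_sq (hz₀ : ‖z₀‖ < 1) (n : ℕ) :
    HasSum (fun k => ‖coeff k (mobiusSeries z₀ 0 n)‖ ^ 2) 1 := by
  simpa [binomialMoment_zero_left hz₀, binomialMoment_zero_zero_zero] using
    hasSum_binomialMoment hz₀ 0 0 n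

lemma hasSum_mul_norm_coeff_mobiusSeries_sq (hz₀ : ‖z₀‖ < 1) (n : ℕ) :
    HasSum (fun k : ℕ => (k : ℝ) * ‖coeff k (mobiusSeries z₀ 0 n)‖ ^ 2) n := by
  simpa [binomialMoment_one_zero hz₀] using hasSum_binomialMoment hz₀ 1 0 n

lemma hasSum_sq_mul_norm_coeff_mobiusSeries_sq (hz₀ : ‖z₀‖ < 1) (n : ℕ) :
    HasSum (fun k : ℕ => (k : ℝ) ^ 2 * ‖coeff k (mobiusSeries z₀ 0 n)‖ ^ 2)
      ((1 + ‖z₀‖ ^ 2) / (1 - ‖z₀‖ ^ 2) * n ^ 2) := by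
  have hsum := ((hasSum_binomialMoment hz₀ 2 0 n).mul_left 2).add
    (hasSum_mul_norm_coeff_mobiusSeries_sq hz₀ n)
  have hq : 1 - ‖z₀‖ ^ 2 ≠ 0 := (sub_pos.2 (sq_norm_lt_one hz₀)).ne'
  convert! hsum using 1
  · ext k
    rw [Nat.cast_choose_two]
    ring
  · field_simp
    linear_combination -binomialMoment_two_zero hz₀ n

lemma natCast_pow_three (k : ℕ) :
    (k : ℝ) ^ 3 = 6 * k.choose 3 + 6 * k.choose 2 + k.choose 1 := by
  induction k with
  | zero => simp
  | succ k ih =>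
    rw [Nat.choose_succ_succ' k 2, Nat.choose_succ_succ' k 1]
    simp only [Nat.choose_one_right, Nat.cast_choose_two, Nat.cast_add, Nat.cast_one,
      Nat.reduceAdd] at ih ⊢
    linear_combination ih

lemma exists_cube_moment_mobiusSeries_le (hz₀ : ‖z₀‖ < 1) :
    ∃ B : ℝ, 0 ≤ B ∧ ∀ n : ℕ, ∃ m ≤ B * n ^ 3,
      HasSum (fun k : ℕ => (k : ℝ) ^ 3 * ‖coeff k (mobiusSeries z₀ 0 n)‖ ^ 2) m := by
  obtain ⟨B₂, hB₂, h₂⟩ := exists_binomialMoment_zero_le hz₀ 2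
  obtain ⟨B₃, hB₃, h₃⟩ := exists_binomialMoment_zero_le hz₀ 3
  refine ⟨6 * B₃ + 6 * B₂ + 1, by positivity, fun n =>
    ⟨6 * binomialMoment z₀ 3 0 n + 6 * binomialMoment z₀ 2 0 n + binomialMoment z₀ 1 0 n, ?_, ?_⟩⟩
  · have hn₁ : (n : ℝ) ≤ n ^ 3 := mod_cast Nat.le_self_pow three_ne_zero n
    have hn₂ : (n : ℝ) ^ 2 ≤ n ^ 3 := by
      obtain rfl | hn := n.eq_zero_or_pos
      · simp
      · exact_mod_cast Nat.pow_le_pow_right hn (Nat.le_succ 2)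
    rw [binomialMoment_one_zero hz₀]
    linarith [h₃ n, (h₂ n).trans (mul_le_mul_of_nonneg_left hn₂ hB₂)]
  · convert! (((hasSum_binomialMoment hz₀ 3 0 n).mul_left 6).add
      ((hasSum_binomialMoment hz₀ 2 0 n).mul_left 6)).add (hasSum_binomialMoment hz₀ 1 0 n) using 1
    ext k
    rw [natCast_pow_three]
    ring

lemma sub_mul_one_sub_sq_le {s x y : ℝ} (hs : 0 ≤ s) (hs1 : s ≤ 1) (hx : 0 ≤ x) (hy : 0 < y) :
    (y - x) * (1 - s * (x / y)) ^ 2 ≤ max (y - x) 0 := by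
  rcases le_total x y with hxy | hxy
  · have hle : s * (x / y) ≤ 1 := mul_le_one₀ hs1 (by positivity) ((div_le_one hy).2 hxy)
    have hnonneg : 0 ≤ s * (x / y) := by positivity
    rw [max_eq_left (sub_nonneg.2 hxy)]
    exact mul_le_of_le_one_right (sub_nonneg.2 hxy)
      (pow_le_one₀ (sub_nonneg.2 hle) (sub_le_self 1 hnonneg))
  · exact (mul_nonpos_of_nonpos_of_nonneg (sub_nonpos.2 hxy) (sq_nonneg _)).trans
      (le_max_right _ _)

lemma hasSum_max_sub_mul (p : ℕ → ℝ) (n : ℕ) :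
    HasSum (fun k : ℕ => max ((n : ℝ) - k) 0 * p k)
      (∑ k ∈ Finset.range n, ((n : ℝ) - k) * p k) := by
  have hsum : ∑ k ∈ Finset.range n, max ((n : ℝ) - k) 0 * p k =
      ∑ k ∈ Finset.range n, ((n : ℝ) - k) * p k := Finset.sum_congr rfl fun k hk => by
    rw [max_eq_left (sub_nonneg.2 (Nat.cast_le.2 (Finset.mem_range.1 hk).le))]
  rw [← hsum]
  refine hasSum_sum_of_ne_finset_zero fun k hk => ?_
  have hk' : n ≤ k := not_lt.1 fun h => hk (Finset.mem_range.2 h)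
  rw [max_eq_right (sub_nonpos.2 (Nat.cast_le.2 hk')), zero_mul]

/-- The test function `(n - k) (1 - s k / n)²` is dominated by the positive part of `n - k`, while
its mean is at least `(2 s v + s² (1 + v - B)) n`; the choice `s = v / (B + v)` makes this
positive. -/
lemma mul_le_sum_range_sub_mul {p : ℕ → ℝ} {n : ℕ} {v B m₂ m₃ : ℝ} (hp : ∀ k, 0 ≤ p k)
    (h₀ : HasSum p 1) (h₁ : HasSum (fun k : ℕ => (k : ℝ) * p k) n)
    (h₂ : HasSum (fun k : ℕ => (k : ℝ) ^ 2 * p k) m₂)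
    (h₃ : HasSum (fun k : ℕ => (k : ℝ) ^ 3 * p k) m₃) (hv : 0 < v) (hB : 0 ≤ B)
    (hm₂ : (1 + v) * n ^ 2 ≤ m₂) (hm₃ : m₃ ≤ B * n ^ 3) :
    v ^ 2 / (B + v) * n ≤ ∑ k ∈ Finset.range n, ((n : ℝ) - k) * p k := by
  obtain rfl | hn := n.eq_zero_or_pos
  · simp
  have hn' : (0 : ℝ) < n := mod_cast hn
  set s := v / (B + v) with hs_def
  have hs : 0 ≤ s := by positivity
  have hs1 : s ≤ 1 := (div_le_one (by positivity)).2 (by linarith)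
  have htest : HasSum (fun k : ℕ => ((n : ℝ) - k) * (1 - s * (k / n)) ^ 2 * p k)
      (2 * s * (m₂ - n ^ 2) / n + s ^ 2 * (n * m₂ - m₃) / n ^ 2) := by
    convert! (((h₀.mul_left (n : ℝ)).sub (h₁.mul_left (1 + 2 * s))).add
      (h₂.mul_left ((2 * s + s ^ 2) / n))).sub (h₃.mul_left (s ^ 2 / n ^ 2)) using 1
    · ext k
      field_simp
      ring
    · field_simp
      ring
  refine le_trans ?_ (hasSum_le (fun k => mul_le_mul_of_nonneg_right
    (sub_mul_one_sub_sq_le hs hs1 k.cast_nonneg hn') (hp k)) htest (hasSum_max_sub_mul p n))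
  calc v ^ 2 / (B + v) * n ≤ n * (2 * s * v + s ^ 2 * (1 + v - B)) := by
        have hsB : s * (B + v) = v := div_mul_cancel₀ v (by positivity)
        have hsv : v ^ 2 / (B + v) = s * v := by rw [hs_def]; ring
        have hle : s * v ≤ 2 * s * v + s ^ 2 * (1 + v - B) := by
          have hrem : 0 ≤ s ^ 2 * (1 + 2 * v) := by positivity
          linear_combination hrem + s * hsB
        rw [hsv, mul_comm]
        gcongr
    _ = 2 * s * ((1 + v) * n ^ 2 - n ^ 2) / n +
          s ^ 2 * (n * ((1 + v) * n ^ 2) - B * n ^ 3) / n ^ 2 := by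
        field_simp
        ring
    _ ≤ 2 * s * (m₂ - n ^ 2) / n + s ^ 2 * (n * m₂ - m₃) / n ^ 2 := by gcongr

lemma exists_mul_le_sum_range_mobiusSeries {z₀ : ℂ} (hz₀ : ‖z₀‖ < 1) (hz₀_ne : z₀ ≠ 0) :
    ∃ ε > 0, ∀ n : ℕ,
      ε * n ≤ ∑ k ∈ Finset.range n, ((n : ℝ) - k) * ‖coeff k (mobiusSeries z₀ 0 n)‖ ^ 2 := by
  obtain ⟨B, hB, hcube⟩ := exists_cube_moment_mobiusSeries_le hz₀
  have hq : 0 < 1 - ‖z₀‖ ^ 2 := sub_pos.2 (sq_norm_lt_one hz₀)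
  set v := 2 * ‖z₀‖ ^ 2 / (1 - ‖z₀‖ ^ 2) with hv_def
  have hv : 0 < v := div_pos (by positivity) hq
  have hv_eq : (1 + ‖z₀‖ ^ 2) / (1 - ‖z₀‖ ^ 2) = 1 + v := by
    rw [hv_def]
    field_simp
    ring
  refine ⟨v ^ 2 / (B + v), by positivity, fun n => ?_⟩
  obtain ⟨m₃, hm₃, h₃⟩ := hcube n
  exact mul_le_sum_range_sub_mul (fun _ => sq_nonneg _) (hasSum_norm_coeff_mobiusSeries_sq hz₀ n)
    (hasSum_mul_norm_coeff_mobiusSeries_sq hz₀ n) (hasSum_sq_mul_norm_coeff_mobiusSeries_sq hz₀ n)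
    h₃ hv hB (by rw [hv_eq]) hm₃

end Moments

section CompositionOperators

lemma taylorCoef_eq_of_hasSum {f : ℂ → ℂ} {c : ℕ → ℂ}
    (hf : ∀ z ∈ unitDisk, HasSum (fun k => c k * z ^ k) (f z)) (k : ℕ) : taylorCoef f k = c k := by
  have hseries : HasFPowerSeriesAt f (FormalMultilinearSeries.ofScalars ℂ c) 0 := by
    refine hasFPowerSeriesAt_iff.2 ?_
    filter_upwards [Metric.ball_mem_nhds (0 : ℂ) one_pos] with z hz
    simpa [FormalMultilinearSeries.coeff_ofScalars, mul_comm] using hf z hz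
  obtain ⟨r, hr⟩ := hseries
  have hfact : (k.factorial : ℂ) ≠ 0 := mod_cast k.factorial_ne_zero
  have hderiv := hr.factorial_smul 1 k
  rw [← iteratedDeriv_eq_iteratedFDeriv] at hderiv
  rw [taylorCoef, ← hderiv]
  simp [hfact]

lemma hasSum_sq_norm (a : H2) : HasSum (fun k => ‖a k‖ ^ 2) (‖a‖ ^ 2) := by
  simpa using lp.hasSum_norm (p := 2) (by simp) a

lemma norm_single_one (n : ℕ) : ‖(lp.single 2 n (1 : ℂ) : H2)‖ = 1 := by
  rw [lp.norm_single (by simp), norm_one]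

variable {β : ℕ → ℝ}

lemma hasSum_repFun (hβ : IsRegularWeight β) (a : H2) {z : ℂ} (hz : z ∈ unitDisk) :
    HasSum (fun k => a k / (β k : ℂ) * z ^ k) (repFun β a z) := by
  obtain ⟨r, hzr, hr1⟩ := exists_between (mem_ball_zero_iff.1 hz)
  have hs := (hβ.inv.isSubexponential r ((norm_nonneg z).trans_lt hzr) hr1).mul_left ‖a‖
  refine (hs.of_norm_bounded fun k => ?_).hasSum
  have hβk := hβ.pos k
  rw [norm_mul, norm_div, norm_pow, Complex.norm_of_nonneg hβk.le, ← mul_assoc, ← div_eq_mul_inv]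
  gcongr
  exact lp.norm_apply_le_norm two_ne_zero a k

lemma repFun_single (n : ℕ) (z : ℂ) :
    repFun β (lp.single 2 n (1 : ℂ)) z = z ^ n / (β n : ℂ) := by
  rw [repFun, tsum_eq_single n fun k hk => by
    rw [lp.single_apply_ne _ _ _ hk, zero_div, zero_mul],
    lp.single_apply_self, one_div_mul_eq_div]

namespace RepComp

variable {ψ : ℂ → ℂ} {T : H2 →L[ℂ] H2}

lemma apply_single (hβ : IsRegularWeight β) (hT : RepComp β ψ T) (n k : ℕ) :
    T (lp.single 2 n (1 : ℂ)) k = taylorCoef (fun z => ψ z ^ n) k * (β k / β n : ℂ) := by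
  have hne (k : ℕ) : (β k : ℂ) ≠ 0 := Complex.ofReal_ne_zero.2 (hβ.pos k).ne'
  have hsum (z : ℂ) (hz : z ∈ unitDisk) :
      HasSum (fun k => β n * (T (lp.single 2 n (1 : ℂ)) k / β k) * z ^ k) (ψ z ^ n) := by
    have h := (hasSum_repFun hβ (T (lp.single 2 n (1 : ℂ))) hz).mul_left (β n : ℂ)
    rw [hT _ z hz, repFun_single, mul_div_cancel₀ _ (hne n)] at h
    simpa only [mul_assoc] using h
  rw [taylorCoef_eq_of_hasSum hsum]
  field_simp [hne]

lemma norm_apply_single_sq (hβ : IsRegularWeight β) (hT : RepComp β ψ T) (n k : ℕ) :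
    ‖T (lp.single 2 n (1 : ℂ)) k‖ ^ 2 =
      ‖taylorCoef (fun z => ψ z ^ n) k‖ ^ 2 * β k ^ 2 / β n ^ 2 := by
  rw [apply_single hβ hT, norm_mul, norm_div, Complex.norm_of_nonneg (hβ.pos k).le,
    Complex.norm_of_nonneg (hβ.pos n).le, mul_pow, div_pow, mul_div_assoc]

lemma wNormSq_pow_div_le (hβ : IsRegularWeight β) (hT : RepComp β ψ T) (n : ℕ) :
    wNormSq β (fun z => ψ z ^ n) / β n ^ 2 ≤ ‖T‖ ^ 2 := by
  have hle : ‖T (lp.single 2 n (1 : ℂ))‖ ≤ ‖T‖ := by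
    simpa only [norm_single_one, mul_one] using T.le_opNorm (lp.single 2 n (1 : ℂ))
  rw [wNormSq, ← tsum_div_const]
  simp only [← norm_apply_single_sq hβ hT, (hasSum_sq_norm _).tsum_eq]
  gcongr

lemma exists_hasSum_sq_taylorCoef_pow_le (hβ : IsRegularWeight β) (hT : RepComp β ψ T) (n : ℕ) :
    ∃ S ≤ ‖T‖ ^ 2,
      HasSum (fun k => ‖taylorCoef (fun z => ψ z ^ k) n‖ ^ 2 * β n ^ 2 / β k ^ 2) S := by
  set b : H2 := ContinuousLinearMap.adjoint T (lp.single 2 n (1 : ℂ)) with hb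
  have hcoord (k : ℕ) : ‖b k‖ = ‖T (lp.single 2 k (1 : ℂ)) n‖ := by
    have h := ContinuousLinearMap.adjoint_inner_left T (lp.single 2 k (1 : ℂ))
      (lp.single 2 n (1 : ℂ))
    rw [lp.inner_single_left, lp.inner_single_right, ← hb] at h
    simpa using congrArg norm h
  have hle : ‖b‖ ≤ ‖T‖ := by
    simpa only [norm_single_one, mul_one, LinearIsometryEquiv.norm_map] using
      (ContinuousLinearMap.adjoint T).le_opNorm (lp.single 2 n (1 : ℂ))
  refine ⟨‖b‖ ^ 2, by gcongr, ?_⟩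
  simpa only [hcoord, norm_apply_single_sq hβ hT] using hasSum_sq_norm b

end RepComp

end CompositionOperators

section Reciprocity

open PowerSeries
open scoped ComplexConjugate

lemma coeff_zero_mobiusSeries (z₀ : ℂ) (s n : ℕ) : coeff 0 (mobiusSeries z₀ s n) = z₀ ^ n := by
  simp [mobiusSeries]

lemma coeff_succ_mobiusSeries_succ (z₀ : ℂ) (s n k : ℕ) :
    coeff (k + 1) (mobiusSeries z₀ s (n + 1)) =
      conj z₀ * coeff k (mobiusSeries z₀ s (n + 1)) + z₀ * coeff (k + 1) (mobiusSeries z₀ s n) -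
        coeff k (mobiusSeries z₀ s n) := by
  have h : (C 1 - C (conj z₀) * X) * mobiusSeries z₀ s (n + 1) =
      (C z₀ - C 1 * X) * mobiusSeries z₀ s n := by
    rw [← numerator_mul_mobiusSeries, ← denominator_mul_mobiusSeries z₀ s n, mul_left_comm]
  have hcoeff := congrArg (coeff (k + 1)) h
  rw [coeff_succ_C_sub_C_mul_X_mul, coeff_succ_C_sub_C_mul_X_mul] at hcoeff
  linear_combination hcoeff

lemma coeff_one_mobiusSeries_zero_succ (z₀ : ℂ) (n : ℕ) :
    coeff 1 (mobiusSeries z₀ 0 (n + 1)) = -(1 - z₀ * conj z₀) * ((n + 1) * z₀ ^ n) := by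
  induction n with
  | zero =>
    rw [coeff_succ_mobiusSeries_succ, coeff_zero_mobiusSeries, mobiusSeries_zero_zero]
    simp [coeff_one, mul_comm]
  | succ n ih =>
    rw [coeff_succ_mobiusSeries_succ, ih, coeff_zero_mobiusSeries, coeff_zero_mobiusSeries]
    push_cast
    ring

lemma coeff_succ_mobiusSeries_zero_one (z₀ : ℂ) (k : ℕ) :
    coeff (k + 1) (mobiusSeries z₀ 0 1) = -(1 - z₀ * conj z₀) * conj z₀ ^ k := by
  induction k with
  | zero => simpa using coeff_one_mobiusSeries_zero_succ z₀ 0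
  | succ k ih =>
    rw [coeff_succ_mobiusSeries_succ, ih, mobiusSeries_zero_zero]
    simp only [coeff_one, Nat.succ_ne_zero, if_false]
    ring

/-- Both sides satisfy the recurrence `coeff_succ_mobiusSeries_succ`, which is symmetric under
exchanging the roles of `n` and `k` and conjugating. -/
lemma coeff_mobiusSeries_reciprocity (z₀ : ℂ) (n k : ℕ) :
    coeff (n + 1) (mobiusSeries z₀ 0 (k + 1)) =
      -(1 - z₀ * conj z₀) * conj (coeff k (mobiusSeries z₀ 2 n)) := by
  induction n generalizing k with
  | zero =>
    rw [zero_add, coeff_one_mobiusSeries_zero_succ, coeff_mobiusSeries_two_zero]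
    simp
  | succ n ihn =>
    induction k with
    | zero =>
      rw [zero_add, coeff_succ_mobiusSeries_zero_one, coeff_zero_mobiusSeries, map_pow]
    | succ k ihk =>
      rw [coeff_succ_mobiusSeries_succ, ihk, ihn, ihn, coeff_succ_mobiusSeries_succ]
      simp only [map_sub, map_add, map_mul, Complex.conj_conj]
      ring

lemma norm_coeff_mobiusSeries_reciprocity {z₀ : ℂ} (hz₀ : ‖z₀‖ < 1) (n k : ℕ) :
    ‖coeff (n + 1) (mobiusSeries z₀ 0 (k + 1))‖ =
      (1 - ‖z₀‖ ^ 2) * ‖coeff k (mobiusSeries z₀ 2 n)‖ := by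
  have hnorm : ‖-(1 - z₀ * conj z₀)‖ = 1 - ‖z₀‖ ^ 2 := by
    rw [norm_neg, Complex.mul_conj', ← Complex.ofReal_pow, ← Complex.ofReal_one,
      ← Complex.ofReal_sub, Complex.norm_of_nonneg (sub_pos.2 (sq_norm_lt_one hz₀)).le]
  rw [coeff_mobiusSeries_reciprocity, norm_mul, hnorm, RCLike.norm_conj]

lemma taylorCoef_mobius_pow {z₀ : ℂ} (hz₀ : ‖z₀‖ < 1) (n k : ℕ) :
    taylorCoef (fun z => mobius z₀ z ^ n) k = coeff k (mobiusSeries z₀ 0 n) :=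
  taylorCoef_eq_of_hasSum (fun _ hz => hasSum_mobius_pow n hz₀ hz) k

end Reciprocity

section Transfer

open PowerSeries
open scoped ComplexConjugate

lemma norm_sub_sq_le (a b : ℂ) : ‖a - b‖ ^ 2 ≤ 2 * (‖a‖ ^ 2 + ‖b‖ ^ 2) := by
  linarith [parallelogram_law_with_norm ℝ a b, sq_nonneg ‖a + b‖]

lemma weightedSq_C_sub_C_mul_X_mul_le {v : ℕ → ℝ} {V : ℝ} (hv : ∀ k, 0 ≤ v k)
    (hV : ∀ k, v (k + 1) ≤ V * v k) (a b : ℂ) {f : PowerSeries ℂ}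
    (hf : Summable fun k => v k * ‖coeff k f‖ ^ 2) :
    weightedSq v ((C a - C b * X) * f) ≤ 2 * (‖a‖ ^ 2 + V * ‖b‖ ^ 2) * weightedSq v f := by
  have hterm (g : PowerSeries ℂ) (k : ℕ) : 0 ≤ v k * ‖coeff k g‖ ^ 2 :=
    mul_nonneg (hv k) (sq_nonneg _)
  have hshift_le (k : ℕ) : v (k + 1) * ‖coeff k f‖ ^ 2 ≤ V * (v k * ‖coeff k f‖ ^ 2) := by
    rw [← mul_assoc]
    exact mul_le_mul_of_nonneg_right (hV k) (sq_nonneg _)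
  have hshift : Summable fun k => v (k + 1) * ‖coeff k f‖ ^ 2 :=
    (hf.mul_left V).of_nonneg_of_le (fun k => mul_nonneg (hv _) (sq_nonneg _)) hshift_le
  have hX : HasSum (fun k => v k * ‖coeff k (X * f)‖ ^ 2)
      (∑' k, v (k + 1) * ‖coeff k f‖ ^ 2) := by
    rw [← hasSum_nat_add_iff' 1]
    simpa [coeff_succ_X_mul] using hshift.hasSum
  have hcoeff (k : ℕ) : v k * ‖coeff k ((C a - C b * X) * f)‖ ^ 2 ≤
      2 * (‖a‖ ^ 2 * (v k * ‖coeff k f‖ ^ 2) + ‖b‖ ^ 2 * (v k * ‖coeff k (X * f)‖ ^ 2)) := by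
    have h := mul_le_mul_of_nonneg_left
      (norm_sub_sq_le (a * coeff k f) (b * coeff k (X * f))) (hv k)
    rw [norm_mul, norm_mul] at h
    rw [sub_mul, map_sub, coeff_C_mul, mul_assoc, coeff_C_mul]
    linarith
  have hmajorant := ((hf.hasSum.mul_left (‖a‖ ^ 2)).add (hX.mul_left (‖b‖ ^ 2))).mul_left 2
  have hsum := hmajorant.summable.of_nonneg_of_le (hterm _) hcoeff
  have hshift_tsum : ∑' k, v (k + 1) * ‖coeff k f‖ ^ 2 ≤ V * weightedSq v f :=
    hasSum_le hshift_le hshift.hasSum (hf.hasSum.mul_left V)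
  calc weightedSq v ((C a - C b * X) * f)
      ≤ 2 * (‖a‖ ^ 2 * weightedSq v f + ‖b‖ ^ 2 * ∑' k, v (k + 1) * ‖coeff k f‖ ^ 2) :=
        hasSum_le hcoeff hsum.hasSum hmajorant
    _ ≤ 2 * (‖a‖ ^ 2 * weightedSq v f + ‖b‖ ^ 2 * (V * weightedSq v f)) := by gcongr
    _ = 2 * (‖a‖ ^ 2 + V * ‖b‖ ^ 2) * weightedSq v f := by ring

variable {z₀ : ℂ} {β : ℕ → ℝ} {T : H2 →L[ℂ] H2}

lemma wNormSq_mobius_pow (hz₀ : ‖z₀‖ < 1) (γ : ℕ → ℝ) (n : ℕ) :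
    wNormSq γ (fun z => mobius z₀ z ^ n) = weightedSq (fun k => γ k ^ 2) (mobiusSeries z₀ 0 n) := by
  simp only [wNormSq, weightedSq, taylorCoef_mobius_pow hz₀, mul_comm]

lemma exists_weightedSq_mobiusSeries_zero_succ_le (hz₀ : ‖z₀‖ < 1) {v : ℕ → ℝ}
    (hv : IsRegularWeight v) :
    ∃ B, 0 ≤ B ∧ ∀ n, weightedSq v (mobiusSeries z₀ 0 (n + 1)) ≤
      B * weightedSq v (mobiusSeries z₀ 2 n) := by
  obtain ⟨V, hV0, hV⟩ := hv.exists_succ_le_mul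
  have hle (a b : ℂ) (s n : ℕ) := weightedSq_C_sub_C_mul_X_mul_le (fun k => (hv.pos k).le) hV a b
    (summable_mul_sq_coeff_mobiusSeries s n hz₀ hv.isSubexponential)
  refine ⟨2 * (‖z₀‖ ^ 2 + V * ‖(1 : ℂ)‖ ^ 2) * (2 * (‖(1 : ℂ)‖ ^ 2 + V * ‖conj z₀‖ ^ 2)),
    by positivity, fun n => ?_⟩
  rw [← numerator_mul_mobiusSeries, mul_assoc]
  refine (hle z₀ 1 1 n).trans (mul_le_mul_of_nonneg_left ?_ (by positivity))
  rw [← denominator_mul_mobiusSeries]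
  exact hle 1 (conj z₀) 2 n

lemma RepComp.weightedSq_mobiusSeries_two_le (hβ : IsRegularWeight β) (hz₀ : ‖z₀‖ < 1)
    (hT : RepComp β (mobius z₀) T) (n : ℕ) :
    (1 - ‖z₀‖ ^ 2) ^ 2 * weightedSq (fun k => (β (k + 1))⁻¹ ^ 2) (mobiusSeries z₀ 2 n) ≤
      ‖T‖ ^ 2 * (β (n + 1))⁻¹ ^ 2 := by
  obtain ⟨S, hS, hsum⟩ := hT.exists_hasSum_sq_taylorCoef_pow_le hβ (n + 1)
  have hzero : 0 ≤ ‖taylorCoef (fun z => mobius z₀ z ^ 0) (n + 1)‖ ^ 2 * β (n + 1) ^ 2 /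
      β 0 ^ 2 := by
    positivity
  have htail := hsum.summable.tsum_eq_zero_add
  rw [hsum.tsum_eq] at htail
  have hterm (k : ℕ) : ‖taylorCoef (fun z => mobius z₀ z ^ (k + 1)) (n + 1)‖ ^ 2 * β (n + 1) ^ 2 /
      β (k + 1) ^ 2 = (1 - ‖z₀‖ ^ 2) ^ 2 * β (n + 1) ^ 2 *
        ((β (k + 1))⁻¹ ^ 2 * ‖coeff k (mobiusSeries z₀ 2 n)‖ ^ 2) := by
    rw [taylorCoef_mobius_pow hz₀, norm_coeff_mobiusSeries_reciprocity hz₀]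
    ring
  simp only [hterm, tsum_mul_left] at htail
  rw [inv_pow, ← div_eq_mul_inv, le_div_iff₀ (pow_pos (hβ.pos _) 2), weightedSq]
  linarith

theorem RepComp.exists_wNormSq_mobius_pow_le (hβ : IsRegularWeight β) (hz₀ : ‖z₀‖ < 1)
    (hT : RepComp β (mobius z₀) T) :
    ∃ K, ∀ n, wNormSq (fun k => (β k)⁻¹) (fun z => mobius z₀ z ^ (n + 1)) /
      (β (n + 1))⁻¹ ^ 2 ≤ K := by
  have hv : IsRegularWeight fun k => (β k)⁻¹ ^ 2 := hβ.inv.pow 2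
  obtain ⟨B, hB, hle⟩ := exists_weightedSq_mobiusSeries_zero_succ_le hz₀ hv
  obtain ⟨U, hU0, hU⟩ := hv.exists_le_mul_succ
  have hq : 0 < (1 - ‖z₀‖ ^ 2) ^ 2 := pow_pos (sub_pos.2 (sq_norm_lt_one hz₀)) 2
  have hshift (n : ℕ) : weightedSq (fun k => (β k)⁻¹ ^ 2) (mobiusSeries z₀ 2 n) ≤
      U * weightedSq (fun k => (β (k + 1))⁻¹ ^ 2) (mobiusSeries z₀ 2 n) := by
    refine hasSum_le (fun k => ?_)
      (summable_mul_sq_coeff_mobiusSeries 2 n hz₀ hv.isSubexponential).hasSum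
      ((summable_mul_sq_coeff_mobiusSeries 2 n hz₀
        hv.isSubexponential.comp_succ).hasSum.mul_left U)
    rw [← mul_assoc]
    exact mul_le_mul_of_nonneg_right (hU k) (sq_nonneg _)
  refine ⟨B * (U * (‖T‖ ^ 2 / (1 - ‖z₀‖ ^ 2) ^ 2)), fun n => ?_⟩
  rw [div_le_iff₀ (hv.pos (n + 1)), wNormSq_mobius_pow hz₀]
  calc weightedSq (fun k => (β k)⁻¹ ^ 2) (mobiusSeries z₀ 0 (n + 1))
      ≤ B * (U * weightedSq (fun k => (β (k + 1))⁻¹ ^ 2) (mobiusSeries z₀ 2 n)) :=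
        (hle n).trans (mul_le_mul_of_nonneg_left (hshift n) hB)
    _ ≤ B * (U * (‖T‖ ^ 2 * (β (n + 1))⁻¹ ^ 2 / (1 - ‖z₀‖ ^ 2) ^ 2)) := by
        gcongr
        rw [le_div_iff₀' hq]
        exact hT.weightedSq_mobiusSeries_two_le hβ hz₀ n
    _ = B * (U * (‖T‖ ^ 2 / (1 - ‖z₀‖ ^ 2) ^ 2)) * (β (n + 1))⁻¹ ^ 2 := by ring

end Transfer

section BergmanWeights

lemma bergBeta_pos {α : ℝ} (hα : 0 ≤ α) (k : ℕ) : 0 < bergBeta α k :=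
  Finset.prod_pos fun _ _ => Real.sqrt_pos.2 (by positivity)

lemma bergBeta_succ (α : ℝ) (k : ℕ) :
    bergBeta α (k + 1) = bergBeta α k * √((k + 2) / (k + 2 * α + 2)) := by
  rw [bergBeta, Finset.prod_Icc_succ_top (by simp), ← bergBeta]
  push_cast
  ring_nf

lemma sq_bergBeta_div_succ {α : ℝ} (hα : 0 ≤ α) (k m : ℕ) :
    (bergBeta α k / bergBeta α (m + 1)) ^ 2 =
      (bergBeta α k / bergBeta α m) ^ 2 * (1 + 2 * α / (m + 2)) := by
  have hm := (bergBeta_pos hα m).ne'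
  rw [bergBeta_succ, div_pow, mul_pow, Real.sq_sqrt (by positivity)]
  field_simp
  ring

lemma one_add_le_sq_bergBeta_div {α : ℝ} (hα : 0 ≤ α) {k m n : ℕ} (hkm : k ≤ m) (hmn : m ≤ n) :
    1 + 2 * α / (n + 1) * (m - k) ≤ (bergBeta α k / bergBeta α m) ^ 2 := by
  induction m, hkm using Nat.le_induction with
  | base => simp [(bergBeta_pos hα k).ne']
  | succ m hkm ih =>
    have ih := ih (Nat.le_of_succ_le hmn)
    have hkm' : 0 ≤ (m : ℝ) - k := sub_nonneg.2 (Nat.cast_le.2 hkm)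
    have hone : 1 ≤ (bergBeta α k / bergBeta α m) ^ 2 :=
      (le_add_of_nonneg_right (by positivity)).trans ih
    have hmn' : (m : ℝ) + 2 ≤ n + 1 := mod_cast Nat.succ_le_succ hmn
    have hincr : 2 * α / (n + 1) ≤ 2 * α / (m + 2) := by gcongr
    calc 1 + 2 * α / (n + 1) * (↑(m + 1) - k)
        = 1 + 2 * α / (n + 1) * (m - k) + 2 * α / (n + 1) := by push_cast; ring
      _ ≤ (bergBeta α k / bergBeta α m) ^ 2 +
            (bergBeta α k / bergBeta α m) ^ 2 * (2 * α / (m + 2)) :=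
          add_le_add ih (hincr.trans (le_mul_of_one_le_left (by positivity) hone))
      _ = (bergBeta α k / bergBeta α (m + 1)) ^ 2 := by
          rw [sq_bergBeta_div_succ hα]
          ring

lemma div_mul_sub_le_sq_bergBeta_div {α : ℝ} (hα : 0 ≤ α) {k n : ℕ} (hk : k < n) :
    α / n * (n - k) ≤ (bergBeta α k / bergBeta α n) ^ 2 := by
  have hn : (1 : ℝ) ≤ n := mod_cast Nat.one_le_of_lt hk
  have hkn : (0 : ℝ) ≤ n - k := sub_nonneg.2 (Nat.cast_le.2 hk.le)
  have hslope : α / n ≤ 2 * α / (n + 1) := by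
    rw [div_le_div_iff₀ (by positivity) (by positivity)]
    linarith [mul_nonneg hα (sub_nonneg.2 hn)]
  linarith [mul_le_mul_of_nonneg_right hslope hkn, one_add_le_sq_bergBeta_div hα hk.le le_rfl]

end BergmanWeights

section Unboundedness

open PowerSeries

variable {β : ℕ → ℝ} {z₀ : ℂ}

lemma mul_sum_range_le_wNormSq_mobius_pow_div (hβ : IsRegularWeight β) (hz₀ : ‖z₀‖ < 1) {c : ℝ}
    {n : ℕ} (h : ∀ k < n, c * (n - k) ≤ (β n / β k) ^ 2) :
    c * ∑ k ∈ Finset.range n, ((n : ℝ) - k) * ‖coeff k (mobiusSeries z₀ 0 n)‖ ^ 2 ≤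
      wNormSq (fun k => (β k)⁻¹) (fun z => mobius z₀ z ^ n) / (β n)⁻¹ ^ 2 := by
  have hsum := summable_mul_sq_coeff_mobiusSeries 0 n hz₀ (hβ.inv.pow 2).isSubexponential
  rw [wNormSq_mobius_pow hz₀, inv_pow, div_inv_eq_mul, weightedSq, ← tsum_mul_right,
    Finset.mul_sum]
  refine (Finset.sum_le_sum fun k hk => ?_).trans
    ((hsum.mul_right _).sum_le_tsum (Finset.range n) fun k _ => by positivity)
  calc c * (((n : ℝ) - k) * ‖coeff k (mobiusSeries z₀ 0 n)‖ ^ 2)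
      = c * (n - k) * ‖coeff k (mobiusSeries z₀ 0 n)‖ ^ 2 := by ring
    _ ≤ (β n / β k) ^ 2 * ‖coeff k (mobiusSeries z₀ 0 n)‖ ^ 2 := by
        gcongr
        exact h k (Finset.mem_range.1 hk)
    _ = (β k)⁻¹ ^ 2 * ‖coeff k (mobiusSeries z₀ 0 n)‖ ^ 2 * β n ^ 2 := by ring

lemma tendsto_wNormSq_mobius_pow_div (hβ : IsRegularWeight β) (hz₀ : ‖z₀‖ < 1) (hz₀_ne : z₀ ≠ 0)
    {b : ℕ → ℝ} {n : ℕ → ℕ} (hb : Tendsto b atTop atTop) (hn : Tendsto n atTop atTop)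
    (h : ∀ j, ∀ k < n j, b j / n j * (n j - k) ≤ (β (n j) / β k) ^ 2) :
    Tendsto (fun j => wNormSq (fun k => (β k)⁻¹) (fun z => mobius z₀ z ^ n j) / (β (n j))⁻¹ ^ 2)
      atTop atTop := by
  obtain ⟨ε, hε, hdeficit⟩ := exists_mul_le_sum_range_mobiusSeries hz₀ hz₀_ne
  refine tendsto_atTop_mono' atTop ?_ (hb.const_mul_atTop hε)
  filter_upwards [hn.eventually_ge_atTop 1, hb.eventually_ge_atTop 0] with j hnj hbj
  have hnj' : (n j : ℝ) ≠ 0 := Nat.cast_ne_zero.2 (Nat.one_le_iff_ne_zero.1 hnj)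
  calc ε * b j = b j / n j * (ε * n j) := by field_simp
    _ ≤ _ := mul_le_mul_of_nonneg_left (hdeficit (n j)) (by positivity)
    _ ≤ _ := mul_sum_range_le_wNormSq_mobius_pow_div hβ hz₀ (h j)

lemma not_exists_repComp_inv_mobius (hβ : IsRegularWeight β) {n : ℕ → ℕ}
    (h : Tendsto
      (fun j => wNormSq (fun k => (β k)⁻¹) (fun z => mobius z₀ z ^ n j) / (β (n j))⁻¹ ^ 2)
      atTop atTop) :
    ¬ ∃ T : H2 →L[ℂ] H2, RepComp (fun k => (β k)⁻¹) (mobius z₀) T := by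
  rintro ⟨T, hT⟩
  obtain ⟨j, hj⟩ := (h.eventually_gt_atTop (‖T‖ ^ 2)).exists
  exact hj.not_ge (hT.wNormSq_pow_div_le hβ.inv (n j))

lemma not_exists_repComp_mobius (hβ : IsRegularWeight β) (hz₀ : ‖z₀‖ < 1) {n : ℕ → ℕ}
    (hn : Tendsto n atTop atTop)
    (h : Tendsto
      (fun j => wNormSq (fun k => (β k)⁻¹) (fun z => mobius z₀ z ^ n j) / (β (n j))⁻¹ ^ 2)
      atTop atTop) :
    ¬ ∃ T : H2 →L[ℂ] H2, RepComp β (mobius z₀) T := by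
  rintro ⟨T, hT⟩
  obtain ⟨K, hK⟩ := hT.exists_wNormSq_mobius_pow_le hβ hz₀
  obtain ⟨j, hj, hnj⟩ := ((h.eventually_gt_atTop K).and (hn.eventually_ge_atTop 1)).exists
  obtain ⟨m, hm⟩ := Nat.exists_eq_add_of_le' hnj
  rw [hm] at hj
  exact hj.not_ge (hK m)

end Unboundedness

section Growth

lemma tendsto_atTop_of_mul_le_succ_mul {q : ℕ → ℝ} {x : ℝ} (hx : 0 < x) (hq : ∀ k, 0 < q k)
    (h : ∀ᶠ k : ℕ in atTop, q k * (k + 1 + x) ≤ q (k + 1) * (k + x)) :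
    Tendsto q atTop atTop := by
  obtain ⟨N, hN⟩ := eventually_atTop.1 h
  have hmono (k : ℕ) (hk : N ≤ k) : q N / (N + x) ≤ q k / (k + x) := by
    induction k, hk using Nat.le_induction with
    | base => rfl
    | succ k hk ih =>
      refine ih.trans ?_
      rw [div_le_div_iff₀ (by positivity) (by positivity), Nat.cast_succ]
      exact hN k hk
  have hc : 0 < q N / (N + x) := div_pos (hq N) (by positivity)
  refine tendsto_atTop_mono' atTop ?_ (tendsto_natCast_atTop_atTop.const_mul_atTop hc)
  filter_upwards [eventually_ge_atTop N] with k hk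
  calc q N / (N + x) * k ≤ q N / (N + x) * (k + x) := by gcongr; linarith
    _ ≤ q k := (le_div_iff₀ (by positivity)).1 (hmono k hk)

lemma div_le_sqrt_bergBeta_factor {α : ℝ} (hα : 0 ≤ α) (k : ℕ) :
    ((k : ℝ) + 2) / (k + 2 + α) ≤ √((k + 2) / (k + 2 * α + 2)) := by
  refine Real.le_sqrt_of_sq_le ?_
  rw [div_pow, div_le_div_iff₀ (by positivity) (by positivity)]
  have : 0 ≤ ((k : ℝ) + 2) * α ^ 2 := by positivity
  linarith

variable {w : ℕ → ℝ}

lemma betaSeq_mul_bergBeta_mul_le_succ {α : ℝ} (hα : 0 ≤ α) {k : ℕ} (hβ : 0 ≤ betaSeq w k)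
    (hw : α + 1 ≤ (k + 2) * (w (k + 1) - 1)) :
    betaSeq w k * bergBeta α k * (k + 1 + (α + 2)) ≤
      betaSeq w (k + 1) * bergBeta α (k + 1) * (k + (α + 2)) := by
  have hfactor : ((k : ℝ) + 1 + (α + 2)) ≤
      w (k + 1) * √((k + 2) / (k + 2 * α + 2)) * (k + (α + 2)) := by
    have hwk : ((k : ℝ) + 1 + (α + 2)) / (k + 2) ≤ w (k + 1) := by
      rw [div_le_iff₀ (by positivity)]
      linarith
    calc ((k : ℝ) + 1 + (α + 2))
        = (k + 1 + (α + 2)) / (k + 2) * ((k + 2) / (k + 2 + α)) * (k + (α + 2)) := by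
          field_simp
          ring
      _ ≤ _ := by
          gcongr
          · exact (by positivity : (0 : ℝ) ≤ (k + 1 + (α + 2)) / (k + 2)).trans hwk
          · exact div_le_sqrt_bergBeta_factor hα k
  rw [betaSeq_succ, bergBeta_succ]
  linarith [mul_le_mul_of_nonneg_left hfactor (mul_nonneg hβ (bergBeta_pos hα k).le)]

lemma tendsto_betaSeq_mul_bergBeta (hpos : ∀ k, 1 ≤ k → 0 < w k)
    (hw : Tendsto (fun k : ℕ => ((k : ℝ) + 1) * (w k - 1)) atTop atTop) {α : ℝ} (hα : 0 ≤ α) :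
    Tendsto (fun k => betaSeq w k * bergBeta α k) atTop atTop := by
  refine tendsto_atTop_of_mul_le_succ_mul (x := α + 2) (by positivity)
    (fun k => mul_pos (betaSeq_pos hpos k) (bergBeta_pos hα k)) ?_
  filter_upwards [(tendsto_add_atTop_nat 1).eventually (hw.eventually_ge_atTop (α + 1))] with k hk
  refine betaSeq_mul_bergBeta_mul_le_succ hα (betaSeq_pos hpos k).le (hk.trans_eq ?_)
  push_cast
  ring

lemma exists_bergBeta_div_le_betaSeq_div (hpos : ∀ k, 1 ≤ k → 0 < w k)
    (hw : Tendsto (fun k : ℕ => ((k : ℝ) + 1) * (w k - 1)) atTop atTop) {α : ℝ} (hα : 0 ≤ α)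
    (N : ℕ) :
    ∃ n ≥ N, ∀ k ≤ n, bergBeta α k / bergBeta α n ≤ betaSeq w n / betaSeq w k := by
  obtain ⟨n, hNn, hn⟩ := high_scores (tendsto_betaSeq_mul_bergBeta hpos hw hα) N
  refine ⟨n, hNn, fun k hk => ?_⟩
  rw [div_le_div_iff₀ (bergBeta_pos hα n) (betaSeq_pos hpos k), mul_comm]
  obtain hlt | rfl := hk.lt_or_eq
  · exact (hn k hlt).le
  · rfl

lemma tendsto_mul_inv_sub_one (hpos : ∀ k, 1 ≤ k → 0 < w k) (hlim : Tendsto w atTop (𝓝 1))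
    (hw : Tendsto (fun k : ℕ => ((k : ℝ) + 1) * (w k - 1)) atTop atBot) :
    Tendsto (fun k : ℕ => ((k : ℝ) + 1) * ((w k)⁻¹ - 1)) atTop atTop := by
  have hinv : Tendsto (fun k => (w k)⁻¹) atTop (𝓝 1) := by simpa using hlim.inv₀ one_ne_zero
  refine ((tendsto_neg_atBot_atTop.comp hw).atTop_mul_pos one_pos hinv).congr' ?_
  filter_upwards [eventually_ge_atTop 1] with k hk
  have := (hpos k hk).ne'
  simp only [Function.comp_apply]
  field_simp
  ring

end Growth

section Main

variable {w : ℕ → ℝ} {z₀ : ℂ}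

theorem tendsto_wNormSq_mobius_pow_div_and_not_exists_repComp (hpos : ∀ k, 1 ≤ k → 0 < w k)
    (hlim : Tendsto w atTop (𝓝 1)) (hz₀ : ‖z₀‖ < 1) (hz₀_ne : z₀ ≠ 0) {a : ℕ → ℝ} {n : ℕ → ℕ}
    (ha : ∀ j, 0 ≤ a j) (ha_lim : Tendsto a atTop atTop) (hn : Tendsto n atTop atTop)
    (h : ∀ j k : ℕ, k ≤ n j →
      bergBeta (a j) k / bergBeta (a j) (n j) ≤ betaSeq w (n j) / betaSeq w k) :
    Tendsto (fun j => wNormSq (fun k => (betaSeq w k)⁻¹) (fun z => mobius z₀ z ^ n j) /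
        (betaSeq w (n j))⁻¹ ^ 2) atTop atTop ∧
      (¬ ∃ T : H2 →L[ℂ] H2, RepComp (fun k => (betaSeq w k)⁻¹) (mobius z₀) T) ∧
      ¬ ∃ T : H2 →L[ℂ] H2, RepComp (betaSeq w) (mobius z₀) T := by
  have hβ := isRegularWeight_betaSeq hpos hlim
  have hratio : Tendsto (fun j => wNormSq (fun k => (betaSeq w k)⁻¹)
      (fun z => mobius z₀ z ^ n j) / (betaSeq w (n j))⁻¹ ^ 2) atTop atTop := by
    refine tendsto_wNormSq_mobius_pow_div hβ hz₀ hz₀_ne ha_lim hn fun j k hk => ?_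
    have hk₀ := bergBeta_pos (ha j) k
    have hn₀ := bergBeta_pos (ha j) (n j)
    exact (div_mul_sub_le_sq_bergBeta_div (ha j) hk).trans
      (pow_le_pow_left₀ (by positivity) (h j k hk.le) 2)
  exact ⟨hratio, not_exists_repComp_inv_mobius hβ hratio,
    not_exists_repComp_mobius hβ hz₀ hn hratio⟩

theorem not_exists_repComp_of_tendsto_atTop (hpos : ∀ k, 1 ≤ k → 0 < w k)
    (hlim : Tendsto w atTop (𝓝 1)) (hz₀ : ‖z₀‖ < 1) (hz₀_ne : z₀ ≠ 0)
    (hw : Tendsto (fun k : ℕ => ((k : ℝ) + 1) * (w k - 1)) atTop atTop) :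
    (¬ ∃ T : H2 →L[ℂ] H2, RepComp (fun k => (betaSeq w k)⁻¹) (mobius z₀) T) ∧
      ¬ ∃ T : H2 →L[ℂ] H2, RepComp (betaSeq w) (mobius z₀) T := by
  choose n hjn hn using fun j : ℕ => exists_bergBeta_div_le_betaSeq_div hpos hw j.cast_nonneg j
  exact (tendsto_wNormSq_mobius_pow_div_and_not_exists_repComp hpos hlim hz₀ hz₀_ne
    (fun j => j.cast_nonneg) tendsto_natCast_atTop_atTop (tendsto_atTop_mono hjn tendsto_id) hn).2

theorem not_exists_repComp_of_tendsto_atBot (hpos : ∀ k, 1 ≤ k → 0 < w k)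
    (hlim : Tendsto w atTop (𝓝 1)) (hz₀ : ‖z₀‖ < 1) (hz₀_ne : z₀ ≠ 0)
    (hw : Tendsto (fun k : ℕ => ((k : ℝ) + 1) * (w k - 1)) atTop atBot) :
    (¬ ∃ T : H2 →L[ℂ] H2, RepComp (fun k => (betaSeq w k)⁻¹) (mobius z₀) T) ∧
      ¬ ∃ T : H2 →L[ℂ] H2, RepComp (betaSeq w) (mobius z₀) T := by
  have hinv := not_exists_repComp_of_tendsto_atTop (w := fun k => (w k)⁻¹)
    (fun k hk => inv_pos.2 (hpos k hk)) (by simpa using hlim.inv₀ one_ne_zero) hz₀ hz₀_ne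
    (tendsto_mul_inv_sub_one hpos hlim hw)
  simp only [betaSeq_inv, inv_inv] at hinv
  exact hinv.symm

theorem statement16_general (w : ℕ → ℝ) (hpos : ∀ k, 1 ≤ k → 0 < w k)
    (hlim : Tendsto w atTop (𝓝 1)) {z₀ : ℂ} (hz₀ : z₀ ∈ unitDisk) (hz₀_ne : z₀ ≠ 0) :
    (∀ (a : ℕ → ℝ) (n : ℕ → ℕ), (∀ j, 0 < a j) → Tendsto a atTop atTop →
      Tendsto n atTop atTop →
      (∀ j k : ℕ, k ≤ n j →
        bergBeta (a j) k / bergBeta (a j) (n j) ≤ betaSeq w (n j) / betaSeq w k) →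
      Tendsto (fun j : ℕ => wNormSq (fun k => (betaSeq w k)⁻¹) (fun z => mobius z₀ z ^ n j) /
          ((betaSeq w (n j))⁻¹) ^ 2) atTop atTop ∧
        (¬ ∃ T : H2 →L[ℂ] H2, RepComp (fun k => (betaSeq w k)⁻¹) (mobius z₀) T) ∧
        (¬ ∃ T : H2 →L[ℂ] H2, RepComp (betaSeq w) (mobius z₀) T)) ∧
    ((Tendsto (fun k : ℕ => ((k : ℝ) + 1) * (w k - 1)) atTop atTop ∨
        Tendsto (fun k : ℕ => ((k : ℝ) + 1) * (w k - 1)) atTop atBot) →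
      (¬ ∃ T : H2 →L[ℂ] H2, RepComp (fun k => (betaSeq w k)⁻¹) (mobius z₀) T) ∧
        (¬ ∃ T : H2 →L[ℂ] H2, RepComp (betaSeq w) (mobius z₀) T)) := by
  have hz₀_norm : ‖z₀‖ < 1 := mem_ball_zero_iff.1 hz₀
  refine ⟨fun a n ha ha_lim hn h => tendsto_wNormSq_mobius_pow_div_and_not_exists_repComp hpos hlim
    hz₀_norm hz₀_ne (fun j => (ha j).le) ha_lim hn h, ?_⟩
  rintro (hw | hw)
  · exact not_exists_repComp_of_tendsto_atTop hpos hlim hz₀_norm hz₀_ne hw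
  · exact not_exists_repComp_of_tendsto_atBot hpos hlim hz₀_norm hz₀_ne hw

lemma ofReal_mem_unitDisk {t : ℝ} (ht : t ∈ Set.Ioo (0 : ℝ) 1) : (t : ℂ) ∈ unitDisk := by
  rw [unitDisk, mem_ball_zero_iff, Complex.norm_of_nonneg ht.1.le]
  exact ht.2

end Main

/-- Let `H²_β` come from a weight sequence `w_k → 1`.  If there are
positive reals `α_j → ∞` and integers `n_j → ∞` with
`β_{n_j}/β_k ≥ β^{(α_j)}_k/β^{(α_j)}_{n_j}` for all `0 ≤ k ≤ n_j`, then for every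
`t ∈ (0,1)` the ratios `‖φ_t^{n_j}‖²_{β⁻¹}/‖z^{n_j}‖²_{β⁻¹}` tend to infinity and
`C_{φ_t}` is unbounded on `H²_{β⁻¹}` and on `H²_β`.  In particular this holds
whenever `(k+1)(w_k - 1) → +∞` or `(k+1)(w_k - 1) → −∞`. -/
theorem statement16 (w : ℕ → ℝ) (hpos : ∀ k, 1 ≤ k → 0 < w k)
    (hlim : Tendsto w atTop (nhds 1)) :
    (∀ (a : ℕ → ℝ) (n : ℕ → ℕ), (∀ j, 0 < a j) → Tendsto a atTop atTop →
      Tendsto n atTop atTop →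
      (∀ j k : ℕ, k ≤ n j →
        bergBeta (a j) k / bergBeta (a j) (n j) ≤ betaSeq w (n j) / betaSeq w k) →
      ∀ t : ℝ, t ∈ Set.Ioo (0:ℝ) 1 →
        Tendsto (fun j : ℕ =>
            wNormSq (fun k => (betaSeq w k)⁻¹) (fun z => mobius (t : ℂ) z ^ n j) /
              ((betaSeq w (n j))⁻¹) ^ 2) atTop atTop ∧
        (¬ ∃ T : H2 →L[ℂ] H2, RepComp (fun k => (betaSeq w k)⁻¹) (mobius (t : ℂ)) T) ∧
        (¬ ∃ T : H2 →L[ℂ] H2, RepComp (betaSeq w) (mobius (t : ℂ)) T)) ∧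
    ((Tendsto (fun k : ℕ => ((k : ℝ) + 1) * (w k - 1)) atTop atTop ∨
        Tendsto (fun k : ℕ => ((k : ℝ) + 1) * (w k - 1)) atTop atBot) →
      ∀ t : ℝ, t ∈ Set.Ioo (0:ℝ) 1 →
        (¬ ∃ T : H2 →L[ℂ] H2, RepComp (fun k => (betaSeq w k)⁻¹) (mobius (t : ℂ)) T) ∧
        (¬ ∃ T : H2 →L[ℂ] H2, RepComp (betaSeq w) (mobius (t : ℂ)) T)) := by
  exact ⟨fun a n ha ha_lim hn h t ht => (statement16_general w hpos hlim (ofReal_mem_unitDisk ht)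
      (Complex.ofReal_ne_zero.2 ht.1.ne')).1 a n ha ha_lim hn h,
    fun hw t ht => (statement16_general w hpos hlim (ofReal_mem_unitDisk ht)
      (Complex.ofReal_ne_zero.2 ht.1.ne')).2 hw⟩
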